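/- arXiv:1510.02013 — 2 statements merged into one kernel-verified Lean document; each statement's English description precedes it below -/
import Mathlib

section
/- Let k ≤ ℓ be natural numbers and let p_k, p_{k+1}, …, p_ℓ ∈ ℝ[λ] satisfy p_i(0) = 0, and set u = ∑_{i=k}^{ℓ} p_i·W_i ∈ Q. Then there exist elements u_2, …, u_{m₀} ∈ Q such that: each u_r is a finite sum u_r = ∑_j q_{r,j}·W_j where q_{r,j} ∈ ℝ[λ] is divisible by λ^r and q_{r,j} = 0 unless j ≥ rk + 1; and exp(u) = exp(p_k·W_k)·exp(p_{k+1}·W_{k+1})⋯exp(p_ℓ·W_ℓ)·exp(u_2)·exp(u_3)⋯exp(u_{m₀}) holds in Q. -/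
open Polynomial

/-- Relation on `D[λ]` whose ring-congruence closure corresponds to the two-sided ideal
generated by `λ^{m₀+1}`; `Q := RingQuot (lamRel D m₀)` is the quotient `D[λ]/(λ^{m₀+1})`. -/
def lamRel (D : Type*) [Ring D] (m₀ : ℕ) : Polynomial D → Polynomial D → Prop :=
  fun a b => a = X ^ (m₀ + 1) ∧ b = 0

/-- The polynomial `p(λ)·W_i ∈ D[λ]` for `p ∈ ℝ[λ]`. -/
noncomputable def pW {D : Type*} [Ring D] [Algebra ℝ D] (W : ℕ → D)
    (p : Polynomial ℝ) (i : ℕ) : Polynomial D :=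
  p.map (algebraMap ℝ D) * C (W i)

/-- The quotient map `D[λ] → Q = D[λ]/(λ^{m₀+1})`. -/
noncomputable def toQ {D : Type*} [Ring D] [Algebra ℝ D] (m₀ : ℕ) :
    Polynomial D →+* RingQuot (lamRel D m₀) := RingQuot.mkRingHom _

/-- The truncated exponential `exp(u) = ∑_{j=0}^{m₀} u^j/j!` in `Q`. -/
noncomputable def expQ {D : Type*} [Ring D] [Algebra ℝ D] {m₀ : ℕ}
    (u : RingQuot (lamRel D m₀)) : RingQuot (lamRel D m₀) :=
  ∑ j ∈ Finset.range (m₀ + 1), (j.factorial : ℝ)⁻¹ • u ^ j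

/-!
Let `F r` be spanned by the `q * W j` with `λ ^ r ∣ q` and `j ≥ r * k + 1`, except that `j ≥ k`
suffices for `r = 1`. As `W i` commutes with itself, a commutator of two generators of `F 1`
involves only indices `j ≥ 2 * k + 1`, and hence `⁅F r, F s⁆ ≤ F (r + s)`.

If `x, y, z ∈ F r` have sum zero, then `g t = exp (t x) * exp (t y) * exp (t z)` satisfies
`g' = a * g`, where the coefficient `a` is a sum of commutators and therefore lies in `F (r + 1)`.
Multiplying `g` by the exponential of an antiderivative of `-a` pushes the coefficient one level
deeper. Iterating this (Fer's factorization) shows that `g 1` is a product of exponentials of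
elements of `F (r + 1)`. Thus exponentials from `F r` can be split and merged at the expense of
exponentials from deeper levels: split `exp u` into its first-level factors, then merge the
remaining factors level by level.
-/

namespace WittZassenhaus

open IsNilpotent (exp exp_eq_sum exp_zero exp_add_of_commute map_exp exp_mul_exp_neg_self
  exp_neg_mul_exp_self)

attribute [local instance] LieRing.ofAssociativeRing

section Conjugation

variable {B : Type*} [Ring B] [Algebra ℚ B]

theorem exp_mulLeft_apply {b : B} (hb : IsNilpotent b) (x : B) :
    exp (LinearMap.mulLeft ℚ b) x = exp b * x :=
  (LinearMap.congr_fun (map_exp hb (Algebra.lmul ℚ B)) x).symm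

theorem exp_mulRight_apply {b : B} (hb : IsNilpotent b) (x : B) :
    exp (LinearMap.mulRight ℚ b) x = x * exp b := by
  obtain ⟨n, hn⟩ := hb
  have hR : LinearMap.mulRight ℚ b ^ n = 0 := by
    rw [LinearMap.pow_mulRight, hn, LinearMap.mulRight_zero_eq_zero]
  simp [exp_eq_sum hn, exp_eq_sum hR, LinearMap.pow_mulRight, Finset.mul_sum]

theorem exp_mul_eq_exp_ad_apply_mul_exp {b : B} (hb : IsNilpotent b) (x : B) :
    exp b * x = exp (LieAlgebra.ad ℚ B b) x * exp b := by
  have hR : IsNilpotent (LinearMap.mulRight ℚ b) := (LinearMap.isNilpotent_mulRight_iff ℚ b).2 hb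
  have had : LinearMap.mulLeft ℚ b = LinearMap.mulRight ℚ b + LieAlgebra.ad ℚ B b := by
    ext y
    simp [Ring.lie_def]
  have hcomm : Commute (LinearMap.mulRight ℚ b) (LieAlgebra.ad ℚ B b) := by
    rw [← sub_eq_of_eq_add' had]
    exact (LinearMap.commute_mulLeft_right b b).symm.sub_right (Commute.refl _)
  rw [← exp_mulLeft_apply hb, had,
    exp_add_of_commute hcomm hR (LieAlgebra.ad_nilpotent_of_nilpotent hb),
    Module.End.mul_apply, exp_mulRight_apply hb]

theorem exp_apply_sub_sub_mem {M : Type*} [AddCommGroup M] [Module ℚ M] {T : Module.End ℚ M}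
    (hT : IsNilpotent T) {S : Submodule ℚ M} (hS : ∀ x ∈ S, T x ∈ S) {y : M} (hy : T (T y) ∈ S) :
    exp T y - y - T y ∈ S := by
  obtain ⟨n, hn⟩ := hT
  have hmem : ∀ i, (T ^ (i + 2)) y ∈ S := fun i ↦ by
    induction i with
    | zero => simpa [sq] using hy
    | succ i ih =>
      rw [pow_succ', Module.End.mul_apply]
      exact hS _ ih
  rw [exp_eq_sum (pow_eq_zero_of_le (Nat.le_add_right n 2) hn), Finset.sum_range_succ',
    Finset.sum_range_succ']
  simpa [LinearMap.sum_apply] using S.sum_mem fun i _ ↦ S.smul_mem _ (hmem i)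

theorem exists_apply_exp_mul_eq {δ : Module.End ℚ B} (hδ : ∀ x y, δ (x * y) = δ x * y + x * δ y)
    {b : B} (hb : IsNilpotent b) {S : Submodule ℚ B} (hS : ∀ x ∈ S, ⁅b, x⁆ ∈ S) {a : B}
    (ha : ⁅b, a⁆ ∈ S) (hbδ : ⁅b, δ b⁆ ∈ S) :
    ∃ a', a' - (a + δ b) ∈ S ∧ ∀ g, δ g = a * g → δ (exp b * g) = a' * (exp b * g) := by
  -- Conjugating the operator `δ - a` by `exp b` yields `exp (ad b) (δ - a)`, which is again of the
  -- form `δ - a'`.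
  let L := Algebra.lmul ℚ B
  have hLb : IsNilpotent (L b) := hb.map L
  have had : ⁅L b, δ - L a⁆ = L (-δ b - ⁅b, a⁆) := by
    ext x
    simp only [L, Ring.lie_def, LinearMap.sub_apply, Module.End.mul_apply, Algebra.coe_lmul_eq_mul,
      LinearMap.mul_apply_apply, hδ]
    noncomm_ring
  have hstable : ∀ f ∈ S.map L.toLinearMap, LieAlgebra.ad ℚ _ (L b) f ∈ S.map L.toLinearMap := by
    rintro _ ⟨x, hx, rfl⟩
    exact ⟨⁅b, x⁆, hS x hx, by simp [Ring.lie_def]⟩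
  have hsq : ⁅L b, ⁅L b, δ - L a⁆⁆ ∈ S.map L.toLinearMap := by
    refine ⟨⁅b, -δ b - ⁅b, a⁆⁆, ?_, by rw [had]; simp [Ring.lie_def]⟩
    rw [lie_sub, lie_neg]
    exact S.sub_mem (S.neg_mem hbδ) (hS _ ha)
  obtain ⟨s, hs, hexp⟩ := exp_apply_sub_sub_mem
    (LieAlgebra.ad_nilpotent_of_nilpotent hLb) hstable hsq
  have hconj : exp (LieAlgebra.ad ℚ _ (L b)) (δ - L a) = δ - L (a + δ b + (⁅b, a⁆ - s)) := by
    rw [LieAlgebra.ad_apply, had, sub_sub, eq_sub_iff_add_eq] at hexp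
    rw [← hexp]
    simp only [AlgHom.toLinearMap_apply, map_add, map_sub, map_neg]
    abel
  refine ⟨a + δ b + (⁅b, a⁆ - s), ?_, fun g hg ↦ ?_⟩
  · simpa using S.sub_mem ha hs
  · have hg' := LinearMap.congr_fun (exp_mul_eq_exp_ad_apply_mul_exp hLb (δ - L a)) g
    rw [hconj, ← map_exp hb L] at hg'
    exact sub_eq_zero.1 (by simpa [L, hg, add_mul, sub_mul] using hg'.symm)

end Conjugation

section Polynomial

theorem map_algebraMap_commute {R A : Type*} [CommSemiring R] [Semiring A] [Algebra R A]
    (q : R[X]) (f : A[X]) : Commute (q.map (algebraMap R A)) f := by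
  induction q using Polynomial.induction_on' with
  | add p q hp hq => simpa using hp.add_left hq
  | monomial n a =>
    rw [map_monomial, ← C_mul_X_pow_eq_monomial]
    exact Commute.mul_left (Algebra.commutes (A := A[X]) a f) (commute_X_pow f n)

theorem coeff_lie {A : Type*} [Ring A] (f g : A[X]) (n : ℕ) :
    ⁅f, g⁆.coeff n = ∑ i ∈ Finset.HasAntidiagonal.antidiagonal n, ⁅f.coeff i.1, g.coeff i.2⁆ := by
  simp only [Ring.lie_def]
  rw [Finset.sum_sub_distrib, coeff_sub, coeff_mul, coeff_mul,
    ← Finset.Nat.sum_antidiagonal_swap (f := fun i ↦ g.coeff i.1 * f.coeff i.2)]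
  rfl

variable {A : Type*} [Ring A] [Algebra ℚ A] {S T : Submodule ℚ A}

/-- The polynomials all of whose coefficients lie in `S`, that is, the polynomial paths in `S`. -/
def polynomialSubmodule (S : Submodule ℚ A) : Submodule ℚ A[X] where
  carrier := {f | ∀ n, f.coeff n ∈ S}
  add_mem' hf hg n := by
    rw [coeff_add]
    exact S.add_mem (hf n) (hg n)
  zero_mem' _ := by simp
  smul_mem' c f hf n := by
    rw [coeff_smul]
    exact S.smul_mem c (hf n)

theorem polynomialSubmodule_mono (h : S ≤ T) : polynomialSubmodule S ≤ polynomialSubmodule T :=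
  fun _ hf n ↦ h (hf n)

theorem polynomialSubmodule_bot : polynomialSubmodule (⊥ : Submodule ℚ A) = ⊥ :=
  (Submodule.eq_bot_iff _).2 fun _ hf ↦ Polynomial.ext hf

theorem polynomialSubmodule_mul_le :
    polynomialSubmodule S * polynomialSubmodule T ≤ polynomialSubmodule (S * T) :=
  Submodule.mul_le.2 fun f hf g hg n ↦ by
    rw [coeff_mul]
    exact Submodule.sum_mem _ fun i _ ↦ Submodule.mul_mem_mul (hf i.1) (hg i.2)

theorem polynomialSubmodule_pow_le (n : ℕ) :
    polynomialSubmodule S ^ (n + 1) ≤ polynomialSubmodule (S ^ (n + 1)) := by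
  induction n with
  | zero => simp
  | succ n ih =>
    rw [pow_succ _ (n + 1), pow_succ _ (n + 1)]
    exact (mul_le_mul_left ih _).trans polynomialSubmodule_mul_le

theorem monomial_mem_polynomialSubmodule {x : A} (hx : x ∈ S) (n : ℕ) :
    monomial n x ∈ polynomialSubmodule S := fun k ↦ by
  rw [coeff_monomial]
  split_ifs
  exacts [hx, S.zero_mem]

theorem derivative_mem_polynomialSubmodule {f : A[X]} (hf : f ∈ polynomialSubmodule S) :
    derivative f ∈ polynomialSubmodule S := fun n ↦ by
  rw [coeff_derivative, ← Nat.cast_succ, ← nsmul_eq_mul']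
  exact S.nsmul_mem (hf _) _

/-- Evaluation at a rational number, which is multiplicative because rational scalars are central
in `A`. -/
noncomputable def evalRat (c : ℚ) : A[X] →+* A :=
  eval₂RingHom' (RingHom.id A) (algebraMap ℚ A c) fun a ↦ (Algebra.commutes c a).symm

theorem evalRat_monomial (c : ℚ) (n : ℕ) (x : A) : evalRat c (monomial n x) = c ^ n • x := by
  change eval _ _ = _
  rw [eval_monomial, ← map_pow, ← Algebra.commutes, ← Algebra.smul_def]

theorem evalRat_mem (c : ℚ) {f : A[X]} (hf : f ∈ polynomialSubmodule S) : evalRat c f ∈ S := by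
  rw [f.as_sum_support, map_sum]
  refine S.sum_mem fun n _ ↦ ?_
  rw [evalRat_monomial]
  exact S.smul_mem _ (hf n)

theorem exists_derivative_eq {f : A[X]} (hf : f ∈ polynomialSubmodule S) :
    ∃ g ∈ polynomialSubmodule S, derivative g = f ∧ evalRat 0 g = 0 := by
  refine ⟨∑ n ∈ f.support, monomial (n + 1) ((n + 1 : ℚ)⁻¹ • f.coeff n),
    Submodule.sum_mem _ fun n _ ↦ monomial_mem_polynomialSubmodule (S.smul_mem _ (hf n)) _, ?_, ?_⟩
  · conv_rhs => rw [f.as_sum_support]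
    rw [derivative_sum]
    refine Finset.sum_congr rfl fun n _ ↦ ?_
    rw [derivative_monomial, ← nsmul_eq_mul', ← Nat.cast_smul_eq_nsmul ℚ, smul_smul]
    push_cast
    rw [mul_inv_cancel₀ (by positivity), one_smul]
  · simp only [map_sum, evalRat_monomial, zero_pow (Nat.succ_ne_zero _), zero_smul,
      Finset.sum_const_zero]

end Polynomial

section Filtration

variable {A : Type*} [Ring A] [Algebra ℚ A]

/-- A finite Lie filtration of nilpotent elements: the subspaces `F 0 ≥ F 1 ≥ ⋯` satisfy
`⁅F r, F s⁆ ≤ F (r + s)`, vanish from index `m + 1` on, and any product of `m + 1` elements of `F 1`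
is zero, so that elements of `F 1` can be exponentiated. -/
structure IsNilpotentFiltration (F : ℕ → Submodule ℚ A) (m : ℕ) : Prop where
  antitone : Antitone F
  lie_mem {r s : ℕ} {x y : A} (hx : x ∈ F r) (hy : y ∈ F s) : ⁅x, y⁆ ∈ F (r + s)
  eq_bot : F (m + 1) = ⊥
  pow_eq_bot : F 1 ^ (m + 1) = ⊥

/-- The multiplicative submonoid of finite products of exponentials of elements of `S`. -/
noncomputable def expMonoid (S : Submodule ℚ A) : Submonoid A :=
  Submonoid.closure (exp '' S)

theorem exp_mem_expMonoid {S : Submodule ℚ A} {x : A} (hx : x ∈ S) : exp x ∈ expMonoid S :=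
  Submonoid.subset_closure ⟨x, hx, rfl⟩

theorem expMonoid_mono {S T : Submodule ℚ A} (h : S ≤ T) : expMonoid S ≤ expMonoid T :=
  Submonoid.closure_mono (Set.image_mono h)

theorem expMonoid_bot : expMonoid (⊥ : Submodule ℚ A) = ⊥ := by
  rw [expMonoid, Submodule.bot_coe, Set.image_singleton, exp_zero, Submonoid.closure_singleton_one]

namespace IsNilpotentFiltration

variable {F : ℕ → Submodule ℚ A} {m r : ℕ}

theorem pow_eq_zero (hF : IsNilpotentFiltration F m) (hr : 1 ≤ r) {x : A} (hx : x ∈ F r) :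
    x ^ (m + 1) = 0 := by
  rw [← Submodule.mem_bot ℚ, ← hF.pow_eq_bot]
  exact Submodule.pow_mem_pow _ (hF.antitone hr hx) _

theorem isNilpotent (hF : IsNilpotentFiltration F m) (hr : 1 ≤ r) {x : A} (hx : x ∈ F r) :
    IsNilpotent x :=
  ⟨m + 1, hF.pow_eq_zero hr hx⟩

theorem polynomial (hF : IsNilpotentFiltration F m) :
    IsNilpotentFiltration (fun r ↦ polynomialSubmodule (F r)) m where
  antitone _ _ h := polynomialSubmodule_mono (hF.antitone h)
  lie_mem hf hg n := by
    rw [coeff_lie]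
    exact Submodule.sum_mem _ fun i _ ↦ hF.lie_mem (hf i.1) (hg i.2)
  eq_bot := by rw [hF.eq_bot, polynomialSubmodule_bot]
  pow_eq_bot := by
    rw [← le_bot_iff, ← polynomialSubmodule_bot, ← hF.pow_eq_bot]
    exact polynomialSubmodule_pow_le m

theorem evalRat_exp (hF : IsNilpotentFiltration F m) (hr : 1 ≤ r) (c : ℚ) {f : A[X]}
    (hf : f ∈ polynomialSubmodule (F r)) : evalRat c (exp f) = exp (evalRat c f) :=
  map_exp (hF.polynomial.isNilpotent hr hf) _

theorem exists_derivative_exp_mul_eq (hF : IsNilpotentFiltration F m) (hr : 1 ≤ r) {a b : A[X]}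
    (ha : a ∈ polynomialSubmodule (F r)) (hb : b ∈ polynomialSubmodule (F r)) :
    ∃ a' ∈ polynomialSubmodule (F r), a' - (a + derivative b) ∈ polynomialSubmodule (F (r + 1)) ∧
      ∀ g, derivative g = a * g → derivative (exp b * g) = a' * (exp b * g) := by
  have hle : r + 1 ≤ r + r := Nat.add_le_add_left hr r
  have hb' := derivative_mem_polynomialSubmodule hb
  obtain ⟨a', ha', hderiv⟩ := exists_apply_exp_mul_eq
    (δ := (derivative : A[X] →ₗ[A] A[X]).restrictScalars ℚ) (fun _ _ ↦ derivative_mul)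
    (hF.polynomial.isNilpotent hr hb) (S := polynomialSubmodule (F (r + 1))) (a := a)
    (fun x hx ↦ hF.polynomial.antitone (Nat.le_add_left _ _) (hF.polynomial.lie_mem hb hx))
    (hF.polynomial.antitone hle (hF.polynomial.lie_mem hb ha))
    (hF.polynomial.antitone hle (hF.polynomial.lie_mem hb hb'))
  refine ⟨a', ?_, ha', hderiv⟩
  simpa using add_mem (hF.polynomial.antitone r.le_succ ha') (add_mem ha hb')

/-- Fer's iteration: an antiderivative of the coefficient `a`, which need not commute with `a`,
solves the equation `g' = a * g` up to an equation whose coefficient lies one step deeper in the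
filtration. -/
theorem exists_evalRat_one_eq_mul (hF : IsNilpotentFiltration F m) (hr : 1 ≤ r) (hrm : r ≤ m + 1)
    {a g : A[X]} (ha : a ∈ polynomialSubmodule (F r)) (hg : derivative g = a * g) :
    ∃ u ∈ expMonoid (F r), evalRat 1 g = u * evalRat 0 g := by
  induction hrm using Nat.decreasingInduction generalizing a g with
  | self =>
    rw [hF.eq_bot, polynomialSubmodule_bot, Submodule.mem_bot] at ha
    have : IsAddTorsionFree A := .of_module_rat A
    refine ⟨1, one_mem _, ?_⟩
    rw [eq_C_of_derivative_eq_zero (by rw [hg, ha, zero_mul] : derivative g = 0),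
      ← monomial_zero_left, evalRat_monomial, evalRat_monomial]
    simp
  | of_succ r _ ih =>
    obtain ⟨b, hb, hba, hb₀⟩ := exists_derivative_eq (Submodule.neg_mem _ ha)
    obtain ⟨a', -, ha', hderiv⟩ := hF.exists_derivative_exp_mul_eq hr ha hb
    rw [hba, add_neg_cancel, sub_zero] at ha'
    obtain ⟨u, hu, hug⟩ := ih (Nat.le_add_left 1 r) ha' (hderiv g hg)
    have hb₁ := evalRat_mem 1 hb
    refine ⟨exp (-evalRat 1 b) * u, mul_mem (exp_mem_expMonoid (Submodule.neg_mem _ hb₁))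
      (expMonoid_mono (hF.antitone r.le_succ) hu), ?_⟩
    rw [map_mul, map_mul, hF.evalRat_exp hr _ hb, hF.evalRat_exp hr _ hb, hb₀, exp_zero,
      one_mul] at hug
    rw [mul_assoc, ← hug, ← mul_assoc, exp_neg_mul_exp_self (hF.isNilpotent hr hb₁), one_mul]

theorem exp_mul_exp_mul_exp_mem (hF : IsNilpotentFiltration F m) (hr : 1 ≤ r) (hrm : r ≤ m)
    {x y z : A} (hx : x ∈ F r) (hy : y ∈ F r) (hz : z ∈ F r) (hxyz : x + y + z = 0) :
    exp x * exp y * exp z ∈ expMonoid (F (r + 1)) := by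
  have hmem {w : A} (hw : w ∈ F r) : monomial 1 w ∈ polynomialSubmodule (F r) :=
    monomial_mem_polynomialSubmodule hw 1
  obtain ⟨a, ha, haz, hz'⟩ := hF.exists_derivative_exp_mul_eq hr (Submodule.zero_mem _) (hmem hz)
  obtain ⟨b, hb, hby, hy'⟩ := hF.exists_derivative_exp_mul_eq hr ha (hmem hy)
  obtain ⟨c, -, hcx, hx'⟩ := hF.exists_derivative_exp_mul_eq hr hb (hmem hx)
  have hc : c ∈ polynomialSubmodule (F (r + 1)) := by
    convert add_mem (add_mem haz hby) hcx using 1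
    simp only [derivative_monomial, Nat.cast_one, mul_one]
    rw [eq_neg_of_add_eq_zero_right hxyz, map_neg, map_add]
    abel
  obtain ⟨u, hu, huxyz⟩ := hF.exists_evalRat_one_eq_mul (Nat.le_add_left 1 r)
    (Nat.succ_le_succ hrm) hc (hx' _ (hy' _ (hz' 1 (by simp))))
  have heval (c : ℚ) {w : A} (hw : w ∈ F r) : evalRat c (exp (monomial 1 w)) = exp (c • w) := by
    rw [hF.evalRat_exp hr c (hmem hw), evalRat_monomial, pow_one]
  simp only [map_mul, heval _ hx, heval _ hy, heval _ hz, one_smul, zero_smul, exp_zero,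
    mul_one] at huxyz
  rwa [mul_assoc, huxyz]

theorem exists_exp_list_sum_eq (hF : IsNilpotentFiltration F m) (hr : 1 ≤ r) (hrm : r ≤ m)
    {l : List A} (hl : ∀ x ∈ l, x ∈ F r) :
    ∃ u ∈ expMonoid (F (r + 1)), exp l.sum = (l.map exp).prod * u := by
  induction l with
  | nil => exact ⟨1, one_mem _, by simp [exp_zero]⟩
  | cons x l ih =>
    obtain ⟨hx, hl⟩ := List.forall_mem_cons.1 hl
    obtain ⟨u, hu, hlu⟩ := ih hl
    have hsum : l.sum ∈ F r := list_sum_mem hl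
    refine ⟨u * (exp (-l.sum) * exp (-x) * exp (x + l.sum)), mul_mem hu
      (hF.exp_mul_exp_mul_exp_mem hr hrm (neg_mem hsum) (neg_mem hx) (add_mem hx hsum)
        (by abel)), ?_⟩
    calc exp (x :: l).sum
        = exp x * (exp l.sum * exp (-l.sum)) * exp (-x) * exp (x + l.sum) := by
          rw [exp_mul_exp_neg_self (hF.isNilpotent hr hsum), mul_one,
            exp_mul_exp_neg_self (hF.isNilpotent hr hx), one_mul, List.sum_cons]
      _ = _ := by
          nth_rw 1 [hlu]
          simp only [List.map_cons, List.prod_cons, mul_assoc]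

theorem exists_eq_exp_mul (hF : IsNilpotentFiltration F m) (hr : 1 ≤ r) (hrm : r ≤ m)
    {u : A} (hu : u ∈ expMonoid (F r)) :
    ∃ x ∈ F r, ∃ v ∈ expMonoid (F (r + 1)), u = exp x * v := by
  induction hu using Submonoid.closure_induction_left with
  | one => exact ⟨0, zero_mem _, 1, one_mem _, by simp [exp_zero]⟩
  | mul_left _ hx _ _ ih =>
    obtain ⟨x, hx, rfl⟩ := hx
    obtain ⟨y, hy, v, hv, rfl⟩ := ih
    have hxy := add_mem hx hy
    refine ⟨x + y, hxy, exp (-(x + y)) * exp x * exp y * v, mul_mem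
      (hF.exp_mul_exp_mul_exp_mem hr hrm (neg_mem hxy) hx hy (by abel)) hv, ?_⟩
    simp only [← mul_assoc]
    rw [exp_mul_exp_neg_self (hF.isNilpotent hr hxy), one_mul]

theorem exists_eq_prod_exp (hF : IsNilpotentFiltration F m) (hr : 1 ≤ r) (hrm : r ≤ m + 1)
    {u : A} (hu : u ∈ expMonoid (F r)) :
    ∃ y : ℕ → A, (∀ s, y s ∈ F s) ∧
      u = ((List.range' r (m + 1 - r)).map fun s ↦ exp (y s)).prod := by
  induction hrm using Nat.decreasingInduction generalizing u with
  | self =>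
    rw [hF.eq_bot, expMonoid_bot, Submonoid.mem_bot] at hu
    exact ⟨0, fun _ ↦ zero_mem _, by simpa using hu⟩
  | of_succ r hrm ih =>
    obtain ⟨x, hx, v, hv, rfl⟩ := hF.exists_eq_exp_mul hr (Nat.le_of_lt_succ hrm) hu
    obtain ⟨y, hy, rfl⟩ := ih (Nat.le_add_left 1 r) hv
    refine ⟨Function.update y r x, fun s ↦ ?_, ?_⟩
    · obtain rfl | hs := eq_or_ne s r
      · simpa using hx
      · simpa [hs] using hy s
    · rw [show m + 1 - r = m + 1 - (r + 1) + 1 by lia, List.range'_succ, List.map_cons,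
        List.prod_cons, Function.update_self]
      congr 2
      refine List.map_congr_left fun s hs ↦ ?_
      have : s ≠ r := by have := List.mem_range'_1.1 hs; lia
      rw [Function.update_of_ne this]

theorem exists_exp_list_sum_eq_prod_exp (hF : IsNilpotentFiltration F m) (hr : 1 ≤ r) (hrm : r ≤ m)
    {l : List A} (hl : ∀ x ∈ l, x ∈ F r) :
    ∃ y : ℕ → A, (∀ s, y s ∈ F s) ∧ exp l.sum =
      (l.map exp).prod * ((List.range' (r + 1) (m - r)).map fun s ↦ exp (y s)).prod := by
  obtain ⟨u, hu, hlu⟩ := hF.exists_exp_list_sum_eq hr hrm hl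
  obtain ⟨y, hy, rfl⟩ := hF.exists_eq_prod_exp (Nat.le_add_left 1 r) (Nat.succ_le_succ hrm) hu
  exact ⟨y, hy, by rw [hlu, Nat.add_sub_add_right]⟩

end IsNilpotentFiltration

end Filtration

section Witt

variable {D : Type*} [Ring D] [Algebra ℝ D] {W : ℕ → D} {m₀ k r s : ℕ}

theorem pW_add (p q : ℝ[X]) (i : ℕ) : pW W (p + q) i = pW W p i + pW W q i := by
  rw [pW, Polynomial.map_add, add_mul, pW, pW]

theorem pW_zero (i : ℕ) : pW W 0 i = 0 := by
  rw [pW, Polynomial.map_zero, zero_mul]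

theorem pW_X_pow_mul (q : ℝ[X]) (i : ℕ) : pW W (X ^ r * q) i = X ^ r * pW W q i := by
  rw [pW, Polynomial.map_mul, Polynomial.map_pow, map_X, mul_assoc, pW]

theorem lie_pW {c : ℝ} {i j : ℕ} (h : ⁅W i, W j⁆ = c • W (i + j)) (p q : ℝ[X]) :
    ⁅pW W p i, pW W q j⁆ = pW W (p * q * C c) (i + j) := by
  have hC : ⁅C (W i), C (W j)⁆ = (C c).map (algebraMap ℝ D) * C (W (i + j)) := by
    rw [map_C, ← C_mul, ← Algebra.smul_def, ← h, Ring.lie_def, Ring.lie_def, C_sub, C_mul, C_mul]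
  simp only [pW, Polynomial.map_mul]
  rw [mul_assoc _ _ (C (W (i + j))), ← hC, Ring.lie_def, Ring.lie_def,
    (map_algebraMap_commute q (C (W i))).symm.mul_mul_mul_comm,
    (map_algebraMap_commute p (C (W j))).symm.mul_mul_mul_comm,
    (map_algebraMap_commute p _).eq, mul_sub]

theorem toQ_X_pow_eq_zero : toQ m₀ (X ^ (m₀ + 1) : D[X]) = 0 := by
  rw [toQ, RingQuot.mkRingHom_rel (r := lamRel D m₀) ⟨rfl, rfl⟩, map_zero]

theorem toQ_X_commute (x : RingQuot (lamRel D m₀)) : Commute (toQ m₀ X) x := by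
  obtain ⟨f, rfl⟩ := RingQuot.mkRingHom_surjective _ x
  exact (commute_X f).map (toQ m₀)

theorem sum_map_range'_toQ (f : ℕ → D[X]) {a b : ℕ} :
    ((List.range' a (b + 1 - a)).map fun i ↦ toQ m₀ (f i)).sum =
      toQ m₀ (∑ i ∈ Finset.Icc a b, f i) := by
  rw [map_sum]
  rfl

/-- The least index `j` for which `W j` occurs in level `r` of the filtration: level `1` contains
the generators from `W k` on, and a commutator of two of them has an index exceeding `2 * k`. -/
def minIndex (k r : ℕ) : ℕ := if r ≤ 1 then r * k else r * k + 1

theorem minIndex_mono (k : ℕ) : Monotone (minIndex k) := fun r s h ↦ by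
  have := Nat.mul_le_mul_right k h
  grind [minIndex]

theorem minIndex_add_le {i j : ℕ} (hi : minIndex k r ≤ i) (hj : minIndex k s ≤ j) (hij : i ≠ j) :
    minIndex k (r + s) ≤ i + j := by
  have := add_mul r s k
  grind [minIndex]

variable [Algebra ℚ D]

theorem exp_eq_expQ {x : RingQuot (lamRel D m₀)} (hx : x ^ (m₀ + 1) = 0) : exp x = expQ x := by
  rw [exp_eq_sum hx, expQ]
  refine Finset.sum_congr rfl fun j _ ↦ ?_
  rw [← Rat.cast_smul_eq_qsmul ℝ]
  push_cast
  rfl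

/-- The family `q` of coefficients as the element `∑ j, q j * W j` of the quotient. -/
noncomputable def wittSum (W : ℕ → D) (m₀ : ℕ) : (ℕ →₀ ℝ[X]) →ₗ[ℚ] RingQuot (lamRel D m₀) :=
  Finsupp.lsum ℚ fun j ↦ ((toQ m₀).toAddMonoidHom.comp
    (AddMonoidHom.mk' (fun p ↦ pW W p j) fun p q ↦ pW_add p q j)).toRatLinearMap

theorem wittSum_apply (q : ℕ →₀ ℝ[X]) :
    wittSum W m₀ q = q.sum fun j p ↦ toQ m₀ (pW W p j) := rfl

theorem wittSum_eq_of_support_subset {q : ℕ →₀ ℝ[X]} {t : Finset ℕ} (h : q.support ⊆ t) :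
    wittSum W m₀ q = toQ m₀ (∑ j ∈ t, pW W (q j) j) := by
  rw [wittSum_apply, Finsupp.sum_of_support_subset q h _ fun j _ ↦ by rw [pW_zero, map_zero],
    map_sum]

theorem wittSum_single (j : ℕ) (p : ℝ[X]) :
    wittSum W m₀ (Finsupp.single j p) = toQ m₀ (pW W p j) := by
  rw [wittSum_apply, Finsupp.sum_single_index (by rw [pW_zero, map_zero])]

/-- The families of coefficients allowed in level `r` of the filtration. -/
def wittCoefficients (k r : ℕ) : Submodule ℚ (ℕ →₀ ℝ[X]) where
  carrier := {q | ∀ j, X ^ r ∣ q j ∧ (j < minIndex k r → q j = 0)}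
  add_mem' hp hq j :=
    ⟨dvd_add (hp j).1 (hq j).1, fun hj ↦ by simp [(hp j).2 hj, (hq j).2 hj]⟩
  zero_mem' := by simp
  smul_mem' c q hq j :=
    ⟨dvd_smul_of_dvd c (hq j).1, fun hj ↦ by simp [(hq j).2 hj]⟩

theorem single_mem_wittCoefficients {j : ℕ} {p : ℝ[X]} (hp : X ^ r ∣ p) (hj : minIndex k r ≤ j) :
    Finsupp.single j p ∈ wittCoefficients k r := fun i ↦ by
  rw [Finsupp.single_apply]
  split_ifs with h
  · exact ⟨hp, fun hi ↦ by lia⟩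
  · exact ⟨dvd_zero _, fun _ ↦ rfl⟩

/-- The subspaces of `D[λ]/(λ^{m₀+1})` spanned by the `q * W j` with `λ ^ r ∣ q` and
`minIndex k r ≤ j`. -/
noncomputable def wittFiltration (W : ℕ → D) (m₀ k r : ℕ) :
    Submodule ℚ (RingQuot (lamRel D m₀)) :=
  (wittCoefficients k r).map (wittSum W m₀)

theorem toQ_pW_mem_wittFiltration {j : ℕ} {p : ℝ[X]} (hp : X ^ r ∣ p) (hj : minIndex k r ≤ j) :
    toQ m₀ (pW W p j) ∈ wittFiltration W m₀ k r :=
  ⟨_, single_mem_wittCoefficients hp hj, wittSum_single j p⟩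

theorem wittFiltration_antitone (W : ℕ → D) (m₀ k : ℕ) : Antitone (wittFiltration W m₀ k) :=
  fun _ _ h ↦ Submodule.map_mono fun _ hq j ↦
    ⟨(pow_dvd_pow X h).trans (hq j).1, fun hj ↦ (hq j).2 (hj.trans_le (minIndex_mono k h))⟩

theorem wittFiltration_eq_span (W : ℕ → D) (m₀ k r : ℕ) : wittFiltration W m₀ k r =
    Submodule.span ℚ {x | ∃ p j, X ^ r ∣ p ∧ minIndex k r ≤ j ∧ x = toQ m₀ (pW W p j)} := by
  apply le_antisymm
  · rintro _ ⟨q, hq, rfl⟩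
    refine Submodule.sum_mem _ fun j hj ↦ Submodule.subset_span
      ⟨q j, j, (hq j).1, not_lt.1 fun h ↦ Finsupp.mem_support_iff.1 hj ((hq j).2 h), rfl⟩
  · rw [Submodule.span_le]
    rintro _ ⟨p, j, hp, hj, rfl⟩
    exact toQ_pW_mem_wittFiltration hp hj

theorem lie_mem_wittFiltration (hW : ∀ i j, ∃ c : ℝ, ⁅W i, W j⁆ = c • W (i + j))
    {x y : RingQuot (lamRel D m₀)} (hx : x ∈ wittFiltration W m₀ k r)
    (hy : y ∈ wittFiltration W m₀ k s) : ⁅x, y⁆ ∈ wittFiltration W m₀ k (r + s) := by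
  rw [wittFiltration_eq_span] at hx hy
  induction hx, hy using Submodule.span_induction₂ with
  | mem_mem x y hx hy =>
    obtain ⟨p, i, hp, hi, rfl⟩ := hx
    obtain ⟨q, j, hq, hj, rfl⟩ := hy
    have hlie (c : ℝ) (h : ⁅W i, W j⁆ = c • W (i + j)) :
        ⁅toQ m₀ (pW W p i), toQ m₀ (pW W q j)⁆ = toQ m₀ (pW W (p * q * C c) (i + j)) := by
      rw [← lie_pW h, Ring.lie_def, Ring.lie_def, map_sub, map_mul, map_mul]
    obtain rfl | hij := eq_or_ne i j
    · rw [hlie 0 (by rw [lie_self, zero_smul]), C_0, mul_zero, pW_zero, map_zero]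
      exact zero_mem _
    · obtain ⟨c, hc⟩ := hW i j
      rw [hlie c hc]
      refine toQ_pW_mem_wittFiltration ?_ (minIndex_add_le hi hj hij)
      rw [pow_add]
      exact (mul_dvd_mul hp hq).mul_right _
  | zero_left _ _ => simp
  | zero_right _ _ => simp
  | add_left x y z _ _ _ hxz hyz => simpa only [add_lie] using add_mem hxz hyz
  | add_right x y z _ _ _ hxy hxz => simpa only [lie_add] using add_mem hxy hxz
  | smul_left c x y _ _ h => simpa only [smul_lie] using Submodule.smul_mem _ c h
  | smul_right c x y _ _ h => simpa only [lie_smul] using Submodule.smul_mem _ c h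

theorem wittFiltration_le_range_mulLeft (W : ℕ → D) (m₀ k r : ℕ) :
    wittFiltration W m₀ k r ≤ LinearMap.range (LinearMap.mulLeft ℚ (toQ m₀ X ^ r)) := by
  rw [wittFiltration_eq_span, Submodule.span_le]
  rintro _ ⟨_, j, ⟨p, rfl⟩, -, rfl⟩
  exact ⟨toQ m₀ (pW W p j), by
    rw [LinearMap.mulLeft_apply, pW_X_pow_mul, map_mul, map_pow]⟩

theorem wittFiltration_one_pow_le_range_mulLeft (W : ℕ → D) (m₀ k n : ℕ) :
    wittFiltration W m₀ k 1 ^ n ≤ LinearMap.range (LinearMap.mulLeft ℚ (toQ m₀ X ^ n)) := by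
  induction n with
  | zero => simp
  | succ n ih =>
    refine Submodule.mul_le.2 fun x hx y hy ↦ ?_
    obtain ⟨x, rfl⟩ := ih hx
    obtain ⟨y, rfl⟩ := wittFiltration_le_range_mulLeft W m₀ k 1 hy
    refine ⟨x * y, ?_⟩
    simp only [LinearMap.mulLeft_apply, pow_one, pow_succ _ n]
    exact (toQ_X_commute x).mul_mul_mul_comm _ _

theorem range_mulLeft_toQ_X_pow_eq_bot (D : Type*) [Ring D] [Algebra ℝ D] [Algebra ℚ D] (m₀ : ℕ) :
    LinearMap.range (LinearMap.mulLeft ℚ (toQ m₀ (X : D[X]) ^ (m₀ + 1))) = ⊥ := by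
  rw [← map_pow, toQ_X_pow_eq_zero, LinearMap.mulLeft_zero_eq_zero, LinearMap.range_zero]

theorem isNilpotentFiltration_wittFiltration
    (hW : ∀ i j, ∃ c : ℝ, ⁅W i, W j⁆ = c • W (i + j)) (m₀ k : ℕ) :
    IsNilpotentFiltration (wittFiltration W m₀ k) m₀ where
  antitone := wittFiltration_antitone W m₀ k
  lie_mem := lie_mem_wittFiltration hW
  eq_bot := le_bot_iff.1 <|
    (wittFiltration_le_range_mulLeft W m₀ k _).trans_eq <| range_mulLeft_toQ_X_pow_eq_bot D m₀
  pow_eq_bot := le_bot_iff.1 <|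
    (wittFiltration_one_pow_le_range_mulLeft W m₀ k _).trans_eq <|
      range_mulLeft_toQ_X_pow_eq_bot D m₀

theorem exists_eq_toQ_sum_of_mem_wittFiltration {y : ℕ → RingQuot (lamRel D m₀)}
    (hy : ∀ r, y r ∈ wittFiltration W m₀ k r) (n : ℕ) :
    ∃ (J : ℕ) (q : ℕ → ℕ → ℝ[X]), (∀ r j, X ^ r ∣ q r j ∧ (j < r * k + 1 → q r j = 0)) ∧
      ∀ r, 2 ≤ r → r ≤ n → y r = toQ m₀ (∑ j ∈ Finset.range (J + 1), pW W (q r j) j) := by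
  choose q hq hqy using hy
  let J := (Finset.range (n + 1)).sup fun r ↦ (q r).support.sup id
  refine ⟨J, fun r j ↦ if 2 ≤ r then q r j else 0, fun r j ↦ ?_, fun r hr hrn ↦ ?_⟩
  · have := hq r j
    grind [minIndex, dvd_zero]
  · have hJ : (q r).support.sup id ≤ J :=
      Finset.le_sup (f := fun r ↦ (q r).support.sup id) (Finset.mem_range_succ_iff.2 hrn)
    have hsupp : (q r).support ⊆ Finset.range (J + 1) := fun j hj ↦
      Finset.mem_range_succ_iff.2 ((Finset.le_sup (f := id) hj).trans hJ)
    rw [← hqy, wittSum_eq_of_support_subset hsupp]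
    simp only [if_pos hr]

end Witt

end WittZassenhaus

/-- Zassenhaus-type splitting under the Witt condition: for
`u = ∑_{i=k}^{ℓ} p_i·W_i` with `p_i(0) = 0`, there are `u_2, …, u_{m₀}`, where `u_r` is a
finite sum `∑_j q_{r,j}·W_j` with `λ^r ∣ q_{r,j}` and `q_{r,j} = 0` unless `j ≥ rk+1`,
such that `exp(u) = exp(p_k·W_k)⋯exp(p_ℓ·W_ℓ)·exp(u_2)⋯exp(u_{m₀})` in `Q`. -/
theorem witt_zassenhaus_splitting {D : Type*} [Ring D] [Algebra ℝ D]
    (W : ℕ → D) (α : ℕ → ℕ → ℝ)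
    (hW : ∀ n m : ℕ, W n * W m - W m * W n = α n m • W (n + m))
    (m₀ : ℕ) (hm₀ : 1 ≤ m₀) (k ℓ : ℕ) (hkl : k ≤ ℓ)
    (p : ℕ → Polynomial ℝ) (hp : ∀ i, (p i).eval 0 = 0) :
    ∃ (J : ℕ) (q : ℕ → ℕ → Polynomial ℝ),
      (∀ r j, X ^ r ∣ q r j) ∧
      (∀ r j, j < r * k + 1 → q r j = 0) ∧
      expQ (toQ m₀ (∑ i ∈ Finset.Icc k ℓ, pW W (p i) i)) =
        ((List.range' k (ℓ + 1 - k)).map fun i => expQ (toQ m₀ (pW W (p i) i))).prod *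
        ((List.range' 2 (m₀ - 1)).map fun r =>
          expQ (toQ m₀ (∑ j ∈ Finset.range (J + 1), pW W (q r j) j))).prod := by
  open WittZassenhaus in
  let _ : Algebra ℚ D := Algebra.compHom D (algebraMap ℚ ℝ)
  have hF := isNilpotentFiltration_wittFiltration (fun i j ↦ ⟨α i j, hW i j⟩) m₀ k
  let l := (List.range' k (ℓ + 1 - k)).map fun i ↦ toQ m₀ (pW W (p i) i)
  have hl : ∀ x ∈ l, x ∈ wittFiltration W m₀ k 1 := List.forall_mem_map.2 fun i hi ↦
    toQ_pW_mem_wittFiltration (by simpa [X_dvd_iff, coeff_zero_eq_eval_zero] using hp i)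
      (by simpa [minIndex] using (List.mem_range'_1.1 hi).1)
  have hexp {r x} (hr : 1 ≤ r) (hx : x ∈ wittFiltration W m₀ k r) :
      IsNilpotent.exp x = expQ x := exp_eq_expQ (hF.pow_eq_zero hr hx)
  obtain ⟨y, hy, hly⟩ := hF.exists_exp_list_sum_eq_prod_exp le_rfl hm₀ hl
  obtain ⟨J, q, hq, hqy⟩ := exists_eq_toQ_sum_of_mem_wittFiltration hy m₀
  refine ⟨J, q, fun r j ↦ (hq r j).1, fun r j ↦ (hq r j).2, ?_⟩
  rw [← sum_map_range'_toQ, ← hexp le_rfl (list_sum_mem hl), hly, List.map_map]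
  congr 2 <;> refine List.map_congr_left fun r hr ↦ ?_
  · exact hexp le_rfl (hl _ (List.mem_map_of_mem hr))
  · obtain ⟨hr₂, hrm⟩ := List.mem_range'_1.1 hr
    rw [hexp (by lia) (hy r), hqy r hr₂ (by lia)]
end

section
/- Let k ≤ ℓ be natural numbers and let p_k, p_{k+1}, …, p_ℓ ∈ ℝ[λ] satisfy p_i(0) = 0, and set u = ∑_{i=k}^{ℓ} p_i·W_i ∈ Q. Then there exist N ∈ ℕ, polynomials q_1, …, q_N ∈ ℝ[λ] with q_j(0) = 0, and indices i_1, …, i_N ∈ ℕ with i_j ≥ k for all j, such that exp(u) = exp(q_1·W_{i_1})·exp(q_2·W_{i_2})⋯exp(q_N·W_{i_N}) holds in Q. -/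
open Polynomial

/-!
Write `u = λ z` and join `1` to `exp u` by the polynomial path `t ↦ exp (t u)`, a solution of
`g' = v g` with `g(0) = 1` and `v = λ z` in the `ℝ[λ, t]`-span of the `W_i`. If `y` is the integral
of a single term `c tⁿ W_i` of `v`, then `exp (-y) g` solves the same kind of equation with that
term removed and the rest of `v` conjugated by `exp (-y)`. As `y` is divisible by `λ` and the span
is closed under brackets, conjugation changes `v` within the span and only in higher order in `λ`.
Removing all terms of lowest order, then those of the next, leaves an equation with `v = 0`, since
`λ` is nilpotent; its solution is `1`, so `g` is the product of the factors `exp y`, and `t = 1`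
gives the decomposition.
-/

open IsNilpotent (exp)
open scoped Pointwise

attribute [local instance] LieRing.ofAssociativeRing Polynomial.algebra

section Conjugation

variable {A : Type*} [Ring A] [Algebra ℚ A]

theorem exp_mulLeft_apply {y : A} (hy : IsNilpotent y) (a : A) :
    exp (LinearMap.mulLeft ℚ y) a = exp y * a := by
  have hmap : exp (Algebra.lmul ℚ A y) = Algebra.lmul ℚ A (exp y) :=
    (IsNilpotent.map_exp hy (Algebra.lmul ℚ A)).symm
  exact LinearMap.congr_fun hmap a

theorem exp_mulRight_apply {y : A} (hy : IsNilpotent y) (a : A) :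
    exp (LinearMap.mulRight ℚ y) a = a * exp y := by
  obtain ⟨n, hn⟩ := hy
  have hR : LinearMap.mulRight ℚ y ^ n = 0 := by
    rw [LinearMap.pow_mulRight, hn, LinearMap.mulRight_zero_eq_zero]
  simp only [IsNilpotent.exp_eq_sum hn, IsNilpotent.exp_eq_sum hR, LinearMap.sum_apply,
    LinearMap.smul_apply, LinearMap.pow_mulRight, LinearMap.mulRight_apply, Finset.mul_sum,
    mul_smul_comm]

theorem exp_ad_apply {y : A} (hy : IsNilpotent y) (a : A) :
    exp (LieAlgebra.ad ℚ A y) a = exp y * a * exp (-y) := by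
  have hL : IsNilpotent (LinearMap.mulLeft ℚ y) := (LinearMap.isNilpotent_mulLeft_iff ℚ y).2 hy
  have hR : IsNilpotent (LinearMap.mulRight ℚ (-y)) :=
    (LinearMap.isNilpotent_mulRight_iff ℚ (-y)).2 hy.neg
  have had : LieAlgebra.ad ℚ A y = LinearMap.mulLeft ℚ y + LinearMap.mulRight ℚ (-y) := by
    ext a
    simp [Ring.lie_def, sub_eq_add_neg]
  rw [had, IsNilpotent.exp_add_of_commute (LinearMap.commute_mulLeft_right y (-y)) hL hR,
    Module.End.mul_apply, exp_mulRight_apply hy.neg, exp_mulLeft_apply hy, mul_assoc]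

theorem exp_apply_sub_mem {M : Type*} [AddCommGroup M] [Module ℚ M] {f : Module.End ℚ M}
    (hf : IsNilpotent f) {N : Submodule ℚ M} (hN : ∀ v ∈ N, f v ∈ N) {v : M} (hv : f v ∈ N) :
    exp f v - v ∈ N := by
  have hpow (n : ℕ) : (f ^ (n + 1)) v ∈ N := by
    induction n with
    | zero => simpa using hv
    | succ n ih =>
      rw [pow_succ', Module.End.mul_apply]
      exact hN _ ih
  obtain ⟨n, hn⟩ := hf
  rw [IsNilpotent.exp_eq_sum (pow_eq_zero_of_le n.le_succ hn), LinearMap.sum_apply,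
    Finset.sum_range_succ']
  simpa using N.sum_mem fun i _ ↦ N.smul_mem _ (hpow i)

theorem commute_exp_right {a y : A} (h : Commute a y) : Commute a (exp y) :=
  Commute.sum_right _ _ _ fun i _ ↦ (h.pow_right i).smul_right _

end Conjugation

section Filtration

theorem pow_succ_smul_le {R M : Type*} [CommSemiring R] [AddCommMonoid M] [Module R M] (x : R)
    (L : Submodule R M) (r : ℕ) : x ^ (r + 1) • L ≤ x ^ r • L := by
  rw [pow_succ, mul_smul]
  exact smul_mono_right (x ^ r) (Submodule.smul_le_self_of_tower x L)

variable {R A : Type*} [CommRing R] [Ring A] [Algebra R A] {L : Submodule R A} {x : R}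

theorem lie_mem_pow_succ_smul (hL : ∀ a ∈ L, ∀ b ∈ L, ⁅a, b⁆ ∈ L) {r : ℕ} {y v : A}
    (hy : y ∈ x • L) (hv : v ∈ x ^ r • L) : ⁅y, v⁆ ∈ x ^ (r + 1) • L := by
  obtain ⟨a, ha, rfl⟩ := (Submodule.mem_smul_pointwise_iff_exists y x L).1 hy
  obtain ⟨b, hb, rfl⟩ := (Submodule.mem_smul_pointwise_iff_exists v (x ^ r) L).1 hv
  have hlie : ⁅x • a, x ^ r • b⁆ = x ^ (r + 1) • ⁅a, b⁆ := by
    rw [smul_lie, Ring.lie_def a, mul_smul_comm, smul_mul_assoc, ← smul_sub, smul_smul, ← pow_succ',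
      Ring.lie_def]
  rw [hlie]
  exact Submodule.smul_mem_pointwise_smul _ _ _ (hL a ha b hb)

theorem pow_smul_eq_bot {n r : ℕ} (hx : algebraMap R A x ^ n = 0) (hr : n ≤ r)
    (L : Submodule R A) : x ^ r • L = ⊥ := by
  rw [eq_bot_iff]
  intro v hv
  obtain ⟨a, -, rfl⟩ := (Submodule.mem_smul_pointwise_iff_exists _ _ _).1 hv
  rw [Submodule.mem_bot, Algebra.smul_def, map_pow, pow_eq_zero_of_le hr hx, zero_mul]

theorem mul_smul_pow_eq_zero {n : ℕ} (hx : algebraMap R A x ^ n = 0) (c : R) (a : A) :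
    ((x * c) • a) ^ n = 0 := by
  rw [_root_.smul_pow, mul_pow, mul_smul, Algebra.smul_def, map_pow, hx, zero_mul]

theorem isNilpotent_mul_smul (hx : IsNilpotent (algebraMap R A x)) (c : R) (a : A) :
    IsNilpotent ((x * c) • a) :=
  hx.imp fun _ hn ↦ mul_smul_pow_eq_zero hn c a

variable [Algebra ℚ R] [Algebra ℚ A]

theorem exp_neg_mul_mul_exp_sub_mem (hL : ∀ a ∈ L, ∀ b ∈ L, ⁅a, b⁆ ∈ L) {r : ℕ} {y v : A}
    (hyn : IsNilpotent y) (hy : y ∈ x • L) (hv : v ∈ x ^ r • L) :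
    exp (-y) * v * exp y - v ∈ x ^ (r + 1) • L := by
  have hlie {s : ℕ} {w : A} (hw : w ∈ x ^ s • L) : ⁅-y, w⁆ ∈ x ^ (s + 1) • L :=
    lie_mem_pow_succ_smul hL (neg_mem hy) hw
  have hsub := exp_apply_sub_mem (LieAlgebra.ad_nilpotent_of_nilpotent (R := ℚ) hyn.neg)
    (N := (x ^ (r + 1) • L).restrictScalars ℚ)
    (fun w hw ↦ pow_succ_smul_le x L (r + 1) (hlie hw)) (hlie hv)
  rwa [exp_ad_apply hyn.neg, neg_neg] at hsub

end Filtration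

section Span

variable {R M : Type*} [Semiring R] [AddCommMonoid M] [Module R M] {s : Set M}

@[elab_as_elim]
theorem span_induction_smul_add {p : (z : M) → z ∈ Submodule.span R s → Prop}
    (zero : p 0 (zero_mem _))
    (smul_add : ∀ (c : R) (a : M) (ha : a ∈ s) (z : M) (hz : z ∈ Submodule.span R s), p z hz →
      p (c • a + z) (add_mem (Submodule.smul_mem _ c (Submodule.subset_span ha)) hz))
    {z : M} (hz : z ∈ Submodule.span R s) : p z hz := by
  have hspan {v : M} : v ∈ Submodule.span R s ↔ v ∈ AddSubmonoid.closure (@Set.univ R • s) := by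
    rw [← Submodule.span_eq_closure, Submodule.mem_toAddSubmonoid]
  refine AddSubmonoid.closure_induction_left (motive := fun v hv ↦ p v (hspan.2 hv)) zero ?_
    (hspan.1 hz)
  rintro _ ⟨c, -, a, ha, rfl⟩ z hz ih
  exact smul_add c a ha z (hspan.2 hz) ih

theorem lie_mem_span_of_forall_lie_mem {R L : Type*} [CommRing R] [LieRing L] [LieAlgebra R L]
    {s : Set L} (hs : ∀ a ∈ s, ∀ b ∈ s, ⁅a, b⁆ ∈ Submodule.span R s) {a b : L}
    (ha : a ∈ Submodule.span R s) (hb : b ∈ Submodule.span R s) : ⁅a, b⁆ ∈ Submodule.span R s := by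
  induction ha, hb using Submodule.span_induction₂ with
  | mem_mem a b ha hb => exact hs a ha b hb
  | zero_left | zero_right => simp
  | add_left _ _ _ _ _ _ h₁ h₂ => rw [add_lie]; exact add_mem h₁ h₂
  | add_right _ _ _ _ _ _ h₁ h₂ => rw [lie_add]; exact add_mem h₁ h₂
  | smul_left c _ _ _ _ h => rw [smul_lie]; exact Submodule.smul_mem _ c h
  | smul_right c _ _ _ _ h => rw [lie_smul]; exact Submodule.smul_mem _ c h

end Span

section Flow

/-- `IsFlow v g`: the polynomial path `g`, with time parameter the variable of `A[X]`, starts at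
`1` and has left logarithmic derivative `v`. -/
structure IsFlow {A : Type*} [Semiring A] (v g : A[X]) : Prop where
  constantCoeff_eq_one : constantCoeff g = 1
  derivative_eq : derivative g = v * g

/-- Evaluation of a path at time `1`, a ring homomorphism although `A` need not be commutative. -/
noncomputable def evalOne (A : Type*) [Semiring A] : A[X] →+* A :=
  eval₂RingHom' (RingHom.id A) 1 fun a ↦ Commute.one_right a

section Semiring

variable {A : Type*} [Semiring A]

theorem evalOne_monomial (n : ℕ) (a : A) : evalOne A (monomial n a) = a := by
  simp [evalOne]

theorem derivative_pow_succ_of_commute {y : A[X]} (hc : Commute (derivative y) y) (n : ℕ) :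
    derivative (y ^ (n + 1)) = (n + 1) • (derivative y * y ^ n) := by
  induction n with
  | zero => simp
  | succ n ih =>
    rw [pow_succ, derivative_mul, ih, smul_mul_assoc, mul_assoc, ← pow_succ,
      ← (hc.pow_right (n + 1)).eq, succ_nsmul _ (n + 1)]

theorem commute_derivative_monomial (n : ℕ) (a : A) :
    Commute (derivative (monomial n a)) (monomial n a) := by
  rw [derivative_monomial, commute_iff_eq, monomial_mul_monomial, monomial_mul_monomial,
    add_comm (n - 1) n, mul_assoc, (Nat.cast_commute n a).eq]

theorem derivative_monomial_succ_inv_smul [Module ℚ A] (n : ℕ) (a : A) :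
    derivative (monomial (n + 1) ((n + 1 : ℚ)⁻¹ • a)) = monomial n a := by
  have hn : (n + 1 : ℚ) ≠ 0 := by positivity
  rw [derivative_monomial, ← nsmul_eq_mul', ← Nat.cast_smul_eq_nsmul ℚ, Nat.cast_succ, smul_smul,
    mul_inv_cancel₀ hn, one_smul, Nat.add_sub_cancel]

end Semiring

variable {A : Type*} [Ring A] [Algebra ℚ A]

theorem derivative_exp_of_commute {y : A[X]} (hy : IsNilpotent y) (hc : Commute (derivative y) y) :
    derivative (exp y) = derivative y * exp y := by
  obtain ⟨n, hn⟩ := hy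
  have hterm (i : ℕ) : derivative (((i + 1).factorial : ℚ)⁻¹ • y ^ (i + 1)) =
      derivative y * ((i.factorial : ℚ)⁻¹ • y ^ i) := by
    have hfact : ((i + 1).factorial : ℚ)⁻¹ * ((i + 1 : ℕ) : ℚ) = (i.factorial : ℚ)⁻¹ := by
      rw [Nat.factorial_succ, Nat.cast_mul, mul_inv_rev, inv_mul_cancel_right₀ (by positivity)]
    rw [derivative_smul, derivative_pow_succ_of_commute hc, ← Nat.cast_smul_eq_nsmul ℚ, smul_smul,
      hfact, mul_smul_comm]
  conv_lhs => rw [IsNilpotent.exp_eq_sum (pow_eq_zero_of_le n.le_succ hn), Finset.sum_range_succ']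
  simp only [derivative_add, derivative_sum, hterm, pow_zero, derivative_smul, derivative_one,
    smul_zero, add_zero, IsNilpotent.exp_eq_sum hn, Finset.mul_sum]

theorem evalOne_exp_monomial (n : ℕ) {a : A} (ha : IsNilpotent a) :
    evalOne A (exp (monomial n a)) = exp a := by
  rw [IsNilpotent.map_exp (isNilpotent_monomial_iff.2 ha), evalOne_monomial]

namespace IsFlow

variable {v y g : A[X]}

theorem eq_one (hg : IsFlow 0 g) : g = 1 := by
  have : IsAddTorsionFree A := .of_module_rat A
  have hdeg : g.natDegree = 0 := derivative_eq_zero.1 (by rw [hg.derivative_eq, zero_mul])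
  rw [eq_C_of_natDegree_eq_zero hdeg, ← C_1]
  exact congrArg C hg.constantCoeff_eq_one

theorem of_exp (hy : IsNilpotent y) (hy0 : constantCoeff y = 0) (hc : Commute (derivative y) y) :
    IsFlow (derivative y) (exp y) where
  constantCoeff_eq_one := by rw [IsNilpotent.map_exp hy, hy0, IsNilpotent.exp_zero]
  derivative_eq := derivative_exp_of_commute hy hc

theorem exp_neg_mul (hg : IsFlow (derivative y + v) g) (hy : IsNilpotent y)
    (hy0 : constantCoeff y = 0) (hc : Commute (derivative y) y) :
    IsFlow (exp (-y) * v * exp y) (exp (-y) * g) where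
  constantCoeff_eq_one := by
    rw [map_mul, hg.constantCoeff_eq_one, IsNilpotent.map_exp hy.neg, map_neg, hy0, neg_zero,
      IsNilpotent.exp_zero, mul_one]
  derivative_eq := by
    have hexp : derivative (exp (-y)) = -(exp (-y) * derivative y) := by
      rw [derivative_exp_of_commute hy.neg (by simpa using hc), derivative_neg, neg_mul,
        (commute_exp_right hc.neg_right).eq]
    calc derivative (exp (-y) * g)
        = -(exp (-y) * derivative y) * g + exp (-y) * ((derivative y + v) * g) := by
          rw [derivative_mul, hexp, hg.derivative_eq]
      _ = exp (-y) * v * (1 * g) := by noncomm_ring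
      _ = exp (-y) * v * exp y * (exp (-y) * g) := by
          rw [← IsNilpotent.exp_mul_exp_neg_self hy]; noncomm_ring

end IsFlow

end Flow

section PathSpan

variable (R : Type*) {A : Type*} [CommRing R] [Ring A] [Algebra R A]

/-- The polynomial paths in the `R`-span of `S`. Generating them by monomials keeps every generator
the derivative of a multiple of a generator. -/
noncomputable def pathSpan (S : Set A) : Submodule R A[X] :=
  Submodule.span R {f | ∃ n, ∃ a ∈ S, f = monomial n a}

variable {R} {S : Set A}

theorem monomial_mem_pathSpan (n : ℕ) {a : A} (ha : a ∈ Submodule.span R S) :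
    monomial n a ∈ pathSpan R S := by
  have hle : (Submodule.span R S).map ((monomial n).restrictScalars R) ≤ pathSpan R S :=
    (Submodule.map_span_le _ _ _).2 fun b hb ↦ Submodule.subset_span ⟨n, b, hb, rfl⟩
  exact hle (Submodule.mem_map_of_mem ha)

theorem lie_mem_pathSpan (hS : ∀ a ∈ S, ∀ b ∈ S, ⁅a, b⁆ ∈ Submodule.span R S) {f g : A[X]}
    (hf : f ∈ pathSpan R S) (hg : g ∈ pathSpan R S) : ⁅f, g⁆ ∈ pathSpan R S := by
  refine lie_mem_span_of_forall_lie_mem ?_ hf hg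
  rintro _ ⟨n, a, ha, rfl⟩ _ ⟨m, b, hb, rfl⟩
  have hlie : ⁅monomial n a, monomial m b⁆ = monomial (n + m) ⁅a, b⁆ := by
    rw [Ring.lie_def, Ring.lie_def, monomial_mul_monomial, monomial_mul_monomial, add_comm m n,
      ← monomial_sub]
  rw [hlie]
  exact monomial_mem_pathSpan (n + m) (hS a ha b hb)

end PathSpan

section Decomposition

variable {R A : Type*} [CommRing R] [Ring A] [Algebra R A] [Algebra ℚ A] {S : Set A} {x : R}

/-- The products of exponentials of single terms `(x * c) • a` with `c : R` and `a ∈ S`. -/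
noncomputable def expProducts (x : R) (S : Set A) : Submonoid A :=
  Submonoid.closure {h | ∃ c : R, ∃ a ∈ S, h = exp ((x * c) • a)}

variable [Algebra ℚ R]

theorem exists_isFlow_of_smul_monomial_add (hx : IsNilpotent (algebraMap R A x))
    (hS : ∀ a ∈ S, ∀ b ∈ S, ⁅a, b⁆ ∈ Submodule.span R S) {r n : ℕ} (c : R) {a : A} (ha : a ∈ S)
    {v g : A[X]} (hv : v ∈ x ^ (r + 1) • pathSpan R S)
    (hg : IsFlow (x ^ (r + 1) • c • monomial n a + v) g) :
    ∃ h ∈ expProducts x S, ∃ w ∈ x ^ (r + 2) • pathSpan R S, ∃ g',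
      IsFlow (v + w) g' ∧ evalOne A g = h * evalOne A g' := by
  set b : A := (x * (x ^ r * ((n + 1 : ℚ)⁻¹ • c))) • a with hb
  set y : A[X] := monomial (n + 1) b with hy
  have hbn : IsNilpotent b := isNilpotent_mul_smul hx _ a
  have hyn : IsNilpotent y := isNilpotent_monomial_iff.2 hbn
  have hyL : y ∈ x • pathSpan R S := by
    rw [hy, hb, mul_smul, ← smul_monomial]
    exact Submodule.smul_mem_pointwise_smul _ x _
      (monomial_mem_pathSpan _ (Submodule.smul_mem _ _ (Submodule.subset_span ha)))
  have hder : derivative y = x ^ (r + 1) • c • monomial n a := by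
    have hb_eq : b = (n + 1 : ℚ)⁻¹ • x ^ (r + 1) • c • a := by
      rw [hb, mul_smul_comm, mul_smul_comm, smul_assoc, ← mul_assoc, ← pow_succ', mul_smul]
    rw [hy, hb_eq, derivative_monomial_succ_inv_smul, smul_monomial, smul_monomial]
  refine ⟨exp b, Submonoid.subset_closure ⟨_, a, ha, congrArg exp hb⟩,
    exp (-y) * v * exp y - v, ?_, exp (-y) * g, ?_, ?_⟩
  · exact exp_neg_mul_mul_exp_sub_mem (fun _ hf _ hg ↦ lie_mem_pathSpan hS hf hg) hyn hyL hv
  · rw [add_sub_cancel]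
    exact IsFlow.exp_neg_mul (by rwa [hder]) hyn (by simp [hy]) (commute_derivative_monomial _ b)
  · rw [← evalOne_exp_monomial (n + 1) hbn, ← map_mul, ← mul_assoc,
      IsNilpotent.exp_mul_exp_neg_self hyn, one_mul]

theorem evalOne_mem_expProducts_of_succ (hx : IsNilpotent (algebraMap R A x))
    (hS : ∀ a ∈ S, ∀ b ∈ S, ⁅a, b⁆ ∈ Submodule.span R S) (r : ℕ)
    (hsucc : ∀ v ∈ x ^ (r + 2) • pathSpan R S, ∀ g, IsFlow v g → evalOne A g ∈ expProducts x S) :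
    ∀ v ∈ x ^ (r + 1) • pathSpan R S, ∀ g, IsFlow v g → evalOne A g ∈ expProducts x S := by
  suffices hpeel : ∀ z ∈ pathSpan R S, ∀ w ∈ x ^ (r + 2) • pathSpan R S, ∀ g,
      IsFlow (x ^ (r + 1) • z + w) g → evalOne A g ∈ expProducts x S by
    intro v hv g hg
    obtain ⟨z, hz, rfl⟩ := (Submodule.mem_smul_pointwise_iff_exists _ _ _).1 hv
    exact hpeel z hz 0 (zero_mem _) g (by rwa [add_zero])
  intro z hz
  induction hz using span_induction_smul_add with
  | zero => exact fun w hw g hg ↦ hsucc w hw g (by simpa using hg)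
  | smul_add c _ ha z hz ih =>
    obtain ⟨n, a, ha, rfl⟩ := ha
    intro w hw g hg
    have hv : x ^ (r + 1) • z + w ∈ x ^ (r + 1) • pathSpan R S :=
      add_mem (Submodule.smul_mem_pointwise_smul _ _ _ hz) (pow_succ_smul_le x _ (r + 1) hw)
    obtain ⟨h, hh, w', hw', g', hg', heval⟩ :=
      exists_isFlow_of_smul_monomial_add hx hS c ha hv (by rwa [← add_assoc, ← smul_add])
    rw [heval]
    exact mul_mem hh (ih (w + w') (add_mem hw hw') g' (by rwa [← add_assoc]))

theorem evalOne_mem_expProducts (hx : IsNilpotent (algebraMap R A x))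
    (hS : ∀ a ∈ S, ∀ b ∈ S, ⁅a, b⁆ ∈ Submodule.span R S) {v g : A[X]}
    (hv : v ∈ x • pathSpan R S) (hg : IsFlow v g) : evalOne A g ∈ expProducts x S := by
  obtain ⟨M, hM⟩ := hx
  have hMX : algebraMap R A[X] x ^ M = 0 := by
    rw [Polynomial.algebraMap_apply, ← C_pow, hM, C_0]
  have hdesc (s r : ℕ) (hrs : M ≤ r + s) : ∀ v ∈ x ^ (r + 1) • pathSpan R S, ∀ g, IsFlow v g →
      evalOne A g ∈ expProducts x S := by
    induction s generalizing r with
    | zero =>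
      intro v hv g hg
      rw [pow_smul_eq_bot hMX (by omega), Submodule.mem_bot] at hv
      subst hv
      rw [hg.eq_one, map_one]
      exact one_mem _
    | succ s ih => exact evalOne_mem_expProducts_of_succ ⟨M, hM⟩ hS r (ih (r + 1) (by omega))
  exact hdesc M 0 (by omega) v (by rwa [zero_add, pow_one]) g hg

theorem exp_smul_mem_expProducts (hx : IsNilpotent (algebraMap R A x))
    (hS : ∀ a ∈ S, ∀ b ∈ S, ⁅a, b⁆ ∈ Submodule.span R S) {z : A} (hz : z ∈ Submodule.span R S) :
    exp (x • z) ∈ expProducts x S := by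
  have hn : IsNilpotent (x • z) := by simpa using isNilpotent_mul_smul hx 1 z
  have hder : derivative (monomial 1 (x • z)) = monomial 0 (x • z) := by simp
  have hflow : IsFlow (monomial 0 (x • z)) (exp (monomial 1 (x • z))) := by
    rw [← hder]
    exact IsFlow.of_exp (isNilpotent_monomial_iff.2 hn) (by simp)
      (commute_derivative_monomial 1 _)
  rw [← evalOne_exp_monomial 1 hn]
  refine evalOne_mem_expProducts hx hS ?_ hflow
  rw [← smul_monomial]
  exact Submodule.smul_mem_pointwise_smul _ x _ (monomial_mem_pathSpan 0 hz)

end Decomposition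

section WittQuotient

theorem exists_prod_range_of_mem_closure {M : Type*} [Monoid M] {s : Set M} {x : M}
    (hx : x ∈ Submonoid.closure s) (hs : s.Nonempty) :
    ∃ (N : ℕ) (f : ℕ → M), (∀ j, f j ∈ s) ∧ x = ((List.range N).map f).prod := by
  obtain ⟨a, ha⟩ := hs
  obtain ⟨l, hl, rfl⟩ := Submonoid.exists_list_of_mem_closure hx
  refine ⟨l.length, (l.getD · a), fun j ↦ ?_, ?_⟩
  · beta_reduce
    rcases lt_or_ge j l.length with hj | hj
    · rw [List.getD_eq_getElem l a hj]
      exact hl _ (List.getElem_mem hj)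
    · rwa [List.getD_eq_default l a hj]
  · congr 1
    exact List.ext_getElem (by simp) fun j hj _ ↦ by simp [hj]

variable {D : Type*} [Ring D] [Algebra ℝ D] {m₀ : ℕ}

theorem algebraMap_eq_toQ (q : ℝ[X]) :
    algebraMap ℝ[X] (RingQuot (lamRel D m₀)) q = toQ m₀ (q.map (algebraMap ℝ D)) := by
  rw [← (RingQuot.mkAlgHom ℝ[X] (lamRel D m₀)).commutes, toQ, ← RingQuot.mkAlgHom_coe ℝ[X]]
  rfl

theorem toQ_pW (W : ℕ → D) (q : ℝ[X]) (i : ℕ) :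
    toQ m₀ (pW W q i) = q • toQ m₀ (C (W i)) := by
  rw [pW, map_mul, Algebra.smul_def, algebraMap_eq_toQ]

theorem algebraMap_X_pow_eq_zero :
    algebraMap ℝ[X] (RingQuot (lamRel D m₀)) X ^ (m₀ + 1) = 0 := by
  rw [algebraMap_eq_toQ, map_X, ← map_pow, ← map_zero (toQ (D := D) m₀)]
  exact RingQuot.mkRingHom_rel ⟨rfl, rfl⟩

theorem toQ_C_mem_span {W : ℕ → D} {S : Set ℕ} {d : D} (hd : d ∈ Submodule.span ℝ (W '' S)) :
    toQ m₀ (C d) ∈ Submodule.span ℝ[X] ((fun i ↦ toQ m₀ (C (W i))) '' S) := by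
  induction hd using Submodule.span_induction with
  | mem _ hd =>
    obtain ⟨i, hi, rfl⟩ := hd
    exact Submodule.subset_span ⟨i, hi, rfl⟩
  | zero => simp
  | add _ _ _ _ h₁ h₂ => rw [C_add, map_add]; exact add_mem h₁ h₂
  | smul c d _ h =>
    have hsmul : toQ m₀ (C (c • d)) = (C c : ℝ[X]) • toQ m₀ (C d) := by
      rw [← toQ_pW (fun _ ↦ d) (C c) 0, pW, map_C, ← C_mul, Algebra.smul_def]
    rw [hsmul]
    exact Submodule.smul_mem _ _ h

variable [Algebra ℚ D]

theorem expQ_eq_exp {u : RingQuot (lamRel D m₀)} (hu : u ^ (m₀ + 1) = 0) : expQ u = exp u := by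
  rw [IsNilpotent.exp_eq_sum hu, expQ]
  exact Finset.sum_congr rfl fun j _ ↦ inv_natCast_smul_eq ℝ ℚ _ _

theorem expQ_mem_expProducts {W : ℕ → D} {S : Set ℕ}
    (hW : ∀ n ∈ S, ∀ m ∈ S, ⁅W n, W m⁆ ∈ Submodule.span ℝ (W '' S)) {s : Finset ℕ}
    (hs : ↑s ⊆ S) {p : ℕ → ℝ[X]} (hp : ∀ i ∈ s, (p i).eval 0 = 0) :
    expQ (toQ m₀ (∑ i ∈ s, pW W (p i) i)) ∈
      expProducts (X : ℝ[X]) ((fun i ↦ toQ m₀ (C (W i))) '' S) := by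
  set z := ∑ i ∈ s, (p i).divX • toQ m₀ (C (W i)) with hz
  have hu : toQ m₀ (∑ i ∈ s, pW W (p i) i) = (X : ℝ[X]) • z := by
    rw [map_sum, hz, Finset.smul_sum]
    refine Finset.sum_congr rfl fun i hi ↦ ?_
    have hpi : X * (p i).divX = p i := by
      simpa [coeff_zero_eq_eval_zero, hp i hi] using X_mul_divX_add (p i)
    rw [toQ_pW, smul_smul, hpi]
  have hpow : ((X : ℝ[X]) • z) ^ (m₀ + 1) = 0 := by
    simpa using mul_smul_pow_eq_zero algebraMap_X_pow_eq_zero 1 z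
  rw [hu, expQ_eq_exp hpow]
  refine exp_smul_mem_expProducts ⟨m₀ + 1, algebraMap_X_pow_eq_zero⟩ ?_ ?_
  · rintro _ ⟨n, hn, rfl⟩ _ ⟨m, hm, rfl⟩
    simpa [Ring.lie_def] using toQ_C_mem_span (m₀ := m₀) (hW n hn m hm)
  · exact sum_mem fun i hi ↦ Submodule.smul_mem _ _ (Submodule.subset_span ⟨i, hs hi, rfl⟩)

end WittQuotient

theorem witt_exp_decomposition_general {D : Type*} [Ring D] [Algebra ℝ D] (W : ℕ → D) {S : Set ℕ}
    (hS : S.Nonempty) (hW : ∀ n ∈ S, ∀ m ∈ S, ⁅W n, W m⁆ ∈ Submodule.span ℝ (W '' S)) (m₀ : ℕ)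
    {s : Finset ℕ} (hs : ↑s ⊆ S) (p : ℕ → ℝ[X]) (hp : ∀ i ∈ s, (p i).eval 0 = 0) :
    ∃ (N : ℕ) (q : ℕ → ℝ[X]) (idx : ℕ → ℕ),
      (∀ j, (q j).eval 0 = 0) ∧
      (∀ j, idx j ∈ S) ∧
      expQ (toQ m₀ (∑ i ∈ s, pW W (p i) i)) =
        ((List.range N).map fun j ↦ expQ (toQ m₀ (pW W (q j) (idx j)))).prod := by
  let : Algebra ℚ D := Algebra.compHom D (algebraMap ℚ ℝ)
  obtain ⟨k, hk⟩ := hS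
  have hmem := expQ_mem_expProducts (m₀ := m₀) hW hs hp
  obtain ⟨N, f, hf, hprod⟩ :=
    exists_prod_range_of_mem_closure hmem ⟨_, 0, _, ⟨k, hk, rfl⟩, rfl⟩
  have hterm (j : ℕ) : ∃ (q : ℝ[X]) (i : ℕ), q.eval 0 = 0 ∧ i ∈ S ∧
      f j = expQ (toQ m₀ (pW W q i)) := by
    obtain ⟨c, _, ⟨i, hi, rfl⟩, hfj⟩ := hf j
    refine ⟨X * c, i, by simp, hi, ?_⟩
    rw [hfj, toQ_pW, expQ_eq_exp (mul_smul_pow_eq_zero algebraMap_X_pow_eq_zero c _)]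
  choose q idx hq hidx hfq using hterm
  exact ⟨N, q, idx, hq, hidx, by rw [hprod, funext hfq]⟩

/-- Under the Witt condition, the exponential of `u = ∑_{i=k}^{ℓ} p_i·W_i` (with
`p_i(0) = 0`) decomposes in `Q` into a finite product of exponentials of single terms
`q_j·W_{i_j}` with `q_j(0) = 0` and `i_j ≥ k`. -/
theorem witt_exp_decomposition {D : Type*} [Ring D] [Algebra ℝ D]
    (W : ℕ → D) (α : ℕ → ℕ → ℝ)
    (hW : ∀ n m : ℕ, W n * W m - W m * W n = α n m • W (n + m))
    (m₀ : ℕ) (hm₀ : 1 ≤ m₀) (k ℓ : ℕ) (hkl : k ≤ ℓ)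
    (p : ℕ → Polynomial ℝ) (hp : ∀ i, (p i).eval 0 = 0) :
    ∃ (N : ℕ) (q : ℕ → Polynomial ℝ) (idx : ℕ → ℕ),
      (∀ j, (q j).eval 0 = 0) ∧
      (∀ j, k ≤ idx j) ∧
      expQ (toQ m₀ (∑ i ∈ Finset.Icc k ℓ, pW W (p i) i)) =
        ((List.range N).map fun j => expQ (toQ m₀ (pW W (q j) (idx j)))).prod := by
  have hspan (n : ℕ) (hn : n ∈ Set.Ici k) (m : ℕ) (_ : m ∈ Set.Ici k) :
      ⁅W n, W m⁆ ∈ Submodule.span ℝ (W '' Set.Ici k) := by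
    rw [Ring.lie_def, hW]
    exact Submodule.smul_mem _ _ (Submodule.subset_span ⟨n + m, Nat.le_add_right_of_le hn, rfl⟩)
  exact witt_exp_decomposition_general W Set.nonempty_Ici hspan m₀
    (fun i hi ↦ (Finset.mem_Icc.1 hi).1) p fun i _ ↦ hp i
end
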